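/- Let μ and ν be positive Borel measures on (0,+∞), with ν σ-finite, and let ψ : (0,+∞) → [0,∞) be a density of the absolutely continuous part of ν with respect to Lebesgue measure. Let 1 < p < ∞ with p' = p/(p−1). Then there is a finite constant C ≥ 0 such that ∫_0^{+∞} (∫_{(0,s)} f(t) dt)^p dμ(s) ≤ C^p ∫_0^{+∞} f(x)^p dν(x) for every Borel measurable f : (0,+∞) → [0,+∞] if and only if B := sup_{r>0} μ([r,+∞))^{1/p} (∫_{(0,r)} ψ(x)^{−p'/p} dx)^{1/p'} is finite; moreover the minimal such C satisfies B ≤ C ≤ (p')^{1/p'} p^{1/p} B. -/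

import Mathlib

open MeasureTheory ENNReal
open scoped NNReal

/-!
Write `κ` for the measure with density `ψ ^ (-p' / p)` and `A` for Muckenhoupt's constant, and
consider more generally functions on a space `X` ordered by a map `N` into a linear order.

*Sufficiency.* In a second-countable linear order `{x | μ [x, ∞) < u}` is the union of an
increasing sequence of rays of measure less than `u`, so its measure is at most `u`, atoms or not.
The layer-cake formula then gives `∫_S μ [x, ∞) ^ (-a) dμ ≤ (1 - a)⁻¹ μ(S) ^ (1 - a)` for
`0 < a < 1`, and likewise with `κ (-∞, x]`. Hölder's inequality with the weight
`ω(t) = ψ(t) κ (-∞, N t] ^ (1 / p')` bounds `(∫_{N < s} f) ^ p` by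
`(p' κ (-∞, s) ^ (1 / p')) ^ (p - 1) ∫_{N < s} ω f ^ p`, where `κ (-∞, s) ^ (1 / p')` is at most
`A μ [s, ∞) ^ (-1 / p)`. Integrate in `s`, exchange the integrals, and use the tail estimate for
`μ`.

*Necessity.* Test the inequality on integrable truncations of `ψ ^ (-p' / p)` on `{N < r}`. The
singular part of `ν` is invisible, as `f` may be set to zero on a null set carrying it.
-/

section LinearOrder

variable {α : Type*} [LinearOrder α] [TopologicalSpace α] [OrderClosedTopology α]
  [SecondCountableTopology α]

theorem exists_countable_biUnion_Ici_eq_of_isUpperSet {U : Set α} (hU : IsUpperSet U) :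
    ∃ T ⊆ U, T.Countable ∧ ⋃ a ∈ T, Set.Ici a = U := by
  by_cases hleast : ∃ a, IsLeast U a
  · obtain ⟨a, ha, ha_le⟩ := hleast
    refine ⟨{a}, by simpa using ha, Set.countable_singleton a, ?_⟩
    rw [Set.biUnion_singleton]
    exact (hU.Ici_subset ha).antisymm ha_le
  · obtain ⟨T, hTU, hT, hUnion⟩ := TopologicalSpace.isOpen_biUnion_countable U Set.Ioi
      fun _ _ ↦ isOpen_Ioi
    refine ⟨T, hTU, hT, Set.Subset.antisymm
      (Set.iUnion₂_subset fun a ha ↦ hU.Ici_subset (hTU ha)) fun x hx ↦ ?_⟩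
    obtain ⟨y, hy, hyx⟩ : ∃ y ∈ U, y < x := by
      by_contra! hmin
      exact hleast ⟨x, hx, hmin⟩
    have hxT : x ∈ ⋃ a ∈ T, Set.Ioi a := hUnion ▸ Set.mem_biUnion hy hyx
    exact Set.iUnion₂_mono (fun _ _ ↦ Set.Ioi_subset_Ici_self) hxT

variable [MeasurableSpace α]

theorem measure_eq_iSup_measure_Ici_of_isUpperSet (μ : Measure α) {U : Set α}
    (hU : IsUpperSet U) : μ U = ⨆ a ∈ U, μ (Set.Ici a) := by
  refine le_antisymm ?_ (iSup₂_le fun a ha ↦ measure_mono (hU.Ici_subset ha))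
  obtain ⟨T, hTU, hT, rfl⟩ := exists_countable_biUnion_Ici_eq_of_isUpperSet hU
  have hdir : DirectedOn (Function.onFun (· ⊆ ·) Set.Ici) T := fun a ha b hb ↦
    (le_total a b).elim (fun hab ↦ ⟨a, ha, le_rfl, Set.Ici_subset_Ici.2 hab⟩)
      fun hba ↦ ⟨b, hb, Set.Ici_subset_Ici.2 hba, le_rfl⟩
  rw [measure_biUnion_eq_iSup hT hdir]
  exact biSup_mono hTU

theorem measure_setOf_measure_Ici_lt_le (μ : Measure α) (u : ℝ≥0∞) :
    μ {x | μ (Set.Ici x) < u} ≤ u := by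
  have hupper : IsUpperSet {x | μ (Set.Ici x) < u} := fun _ _ hxy hx ↦
    (measure_mono (Set.Ici_subset_Ici.2 hxy)).trans_lt hx
  rw [measure_eq_iSup_measure_Ici_of_isUpperSet μ hupper]
  exact iSup₂_le fun _ ha ↦ le_of_lt ha

theorem measure_setOf_measure_Iic_lt_le (μ : Measure α) (u : ℝ≥0∞) :
    μ {x | μ (Set.Iic x) < u} ≤ u :=
  measure_setOf_measure_Ici_lt_le (α := αᵒᵈ) μ u

theorem sigmaFinite_restrict_of_isUpperSet [OpensMeasurableSpace α] (μ : Measure α) {U : Set α}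
    (hU : IsUpperSet U) (hfin : ∀ a ∈ U, μ (Set.Ici a) ≠ ⊤) : SigmaFinite (μ.restrict U) := by
  obtain ⟨T, hTU, hT, hUnion⟩ := exists_countable_biUnion_Ici_eq_of_isUpperSet hU
  have hUm : MeasurableSet U := hUnion ▸ .biUnion hT fun _ _ ↦ measurableSet_Ici
  refine Measure.sigmaFinite_of_countable (S := insert Uᶜ (Set.Ici '' T))
    ((hT.image _).insert _) ?_ ?_
  · rintro _ (rfl | ⟨a, ha, rfl⟩)
    · simp [Measure.restrict_apply hUm.compl]
    · exact (Measure.restrict_apply_le _ _).trans_lt (hfin a (hTU ha)).lt_top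
  · rw [Set.sUnion_insert, Set.sUnion_image, hUnion, Set.compl_union_self]

end LinearOrder

section LayerCake

variable {X : Type*} [MeasurableSpace X] {ρ : Measure X} {F : X → ℝ≥0∞}

theorem ae_ne_zero_of_forall_measure_lt_le (hF : ∀ u, ρ {x | F x < u} ≤ u) :
    ∀ᵐ x ∂ρ, F x ≠ 0 := by
  refine nonpos_iff_eq_zero.1 (le_of_forall_gt_imp_ge_of_dense fun u hu ↦ ?_)
  refine (measure_mono fun x hx ↦ ?_).trans (hF u)
  simpa [not_not.1 hx] using hu

theorem measure_lt_toReal_rpow_neg_le (hF : ∀ u, ρ {x | F x < u} ≤ u) {a l : ℝ} (ha : 0 < a)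
    (hl : 0 < l) : ρ {x | l < (F x ^ (-a)).toReal} ≤ ENNReal.ofReal (l ^ (-a⁻¹)) := by
  refine (measure_mono fun x hx ↦ ?_).trans (hF _)
  have hne : F x ^ (-a) ≠ ⊤ := (ENNReal.toReal_pos_iff.1 (hl.trans hx)).2.ne
  have hlt : ENNReal.ofReal l < F x ^ (-a) := (ENNReal.ofReal_lt_iff_lt_toReal hl.le hne).2 hx
  rw [ENNReal.rpow_neg, ENNReal.lt_inv_iff_lt_inv, ← ENNReal.lt_rpow_inv_iff ha] at hlt
  rwa [ENNReal.inv_rpow, ← ENNReal.rpow_neg, ENNReal.ofReal_rpow_of_pos hl] at hlt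

theorem lintegral_Ioi_rpow_of_lt {b c : ℝ} (hb : b < -1) (hc : 0 < c) :
    ∫⁻ l in Set.Ioi c, ENNReal.ofReal (l ^ b) = ENNReal.ofReal (-c ^ (b + 1) / (b + 1)) := by
  rw [← integral_Ioi_rpow_of_lt hb hc,
    ofReal_integral_eq_lintegral_ofReal (integrableOn_Ioi_rpow_of_lt hb hc)]
  exact (ae_restrict_iff' measurableSet_Ioi).2 <| .of_forall fun l hl ↦
    Real.rpow_nonneg (hc.trans hl).le _

theorem lintegral_Ioi_min_rpow_neg_inv_le {a T : ℝ} (ha₀ : 0 < a) (ha₁ : a < 1) (hT : 0 < T) :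
    ∫⁻ l in Set.Ioi 0, min (ENNReal.ofReal T) (ENNReal.ofReal (l ^ (-a⁻¹))) ≤
      ENNReal.ofReal (1 - a)⁻¹ * ENNReal.ofReal T ^ (1 - a) := by
  have hinv : -a⁻¹ < -1 := neg_lt_neg ((one_lt_inv₀ ha₀).2 ha₁)
  have hcut : 0 < T ^ (-a) := Real.rpow_pos_of_pos hT _
  have hlow : T * T ^ (-a) = T ^ (1 - a) := by
    rw [sub_eq_add_neg, Real.rpow_add hT, Real.rpow_one]
  have hhigh : (T ^ (-a)) ^ (-a⁻¹ + 1) = T ^ (1 - a) := by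
    rw [← Real.rpow_mul hT.le]; congr 1; field_simp; ring
  calc
    _ ≤ (∫⁻ _ in Set.Ioc 0 (T ^ (-a)), ENNReal.ofReal T) +
        ∫⁻ l in Set.Ioi (T ^ (-a)), ENNReal.ofReal (l ^ (-a⁻¹)) := by
      rw [← Set.Ioc_union_Ioi_eq_Ioi hcut.le]
      refine (lintegral_union_le _ _ _).trans ?_
      gcongr
      · exact min_le_left _ _
      · exact min_le_right _ _
    _ = ENNReal.ofReal (T ^ (1 - a)) +
        ENNReal.ofReal (-T ^ (1 - a) / (-a⁻¹ + 1)) := by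
      rw [lintegral_Ioi_rpow_of_lt hinv hcut, hhigh, ← hlow, ENNReal.ofReal_mul hT.le]
      simp
    _ = _ := by
      have hneg : -a⁻¹ + 1 < 0 := by linarith
      have hpos : 0 < T ^ (1 - a) := Real.rpow_pos_of_pos hT _
      have h1a : 0 < 1 - a := by linarith
      rw [ENNReal.ofReal_rpow_of_pos hT, ← ENNReal.ofReal_mul (by positivity),
        ← ENNReal.ofReal_add hpos.le (div_nonneg_of_nonpos (by linarith) hneg.le)]
      congr 1
      have : a - 1 ≠ 0 := by linarith
      rw [show -a⁻¹ + 1 = (a - 1) / a by field_simp; ring]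
      field_simp
      ring

theorem lintegral_rpow_neg_le_of_forall_measure_lt_le (hFm : Measurable F)
    (hF : ∀ u, ρ {x | F x < u} ≤ u) {a : ℝ} (ha₀ : 0 < a) (ha₁ : a < 1) :
    ∫⁻ x, F x ^ (-a) ∂ρ ≤ ENNReal.ofReal (1 - a)⁻¹ * ρ Set.univ ^ (1 - a) := by
  have h1a : 0 < 1 - a := by linarith
  rcases eq_or_ne (ρ Set.univ) 0 with hzero | hzero
  · simp [Measure.measure_univ_eq_zero.1 hzero]
  rcases eq_or_ne (ρ Set.univ) ⊤ with htop | htop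
  · simp [htop, ENNReal.top_rpow_of_pos h1a, ENNReal.mul_top, ha₁]
  have hfin : ∀ᵐ x ∂ρ, F x ^ (-a) = ENNReal.ofReal (F x ^ (-a)).toReal := by
    filter_upwards [ae_ne_zero_of_forall_measure_lt_le hF] with x hx
    rw [ENNReal.ofReal_toReal]
    simp [ENNReal.rpow_eq_top_iff, hx, ha₀.le]
  have hT : 0 < (ρ Set.univ).toReal := ENNReal.toReal_pos hzero htop
  calc
    ∫⁻ x, F x ^ (-a) ∂ρ = ∫⁻ l in Set.Ioi 0, ρ {x | l < (F x ^ (-a)).toReal} := by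
      rw [lintegral_congr_ae hfin, lintegral_eq_lintegral_meas_lt ρ
        (.of_forall fun _ ↦ toReal_nonneg) (hFm.pow_const _).ennreal_toReal.aemeasurable]
    _ ≤ ∫⁻ l in Set.Ioi 0, min (ENNReal.ofReal (ρ Set.univ).toReal)
          (ENNReal.ofReal (l ^ (-a⁻¹))) := by
      refine setLIntegral_mono' measurableSet_Ioi fun l hl ↦ le_min ?_ ?_
      · rw [ENNReal.ofReal_toReal htop]
        exact measure_mono (Set.subset_univ _)
      · exact measure_lt_toReal_rpow_neg_le hF ha₀ hl
    _ ≤ _ := by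
      simpa only [ENNReal.ofReal_toReal htop] using lintegral_Ioi_min_rpow_neg_inv_le ha₀ ha₁ hT

end LayerCake

section MeasureTails

variable {α : Type*} [LinearOrder α] [TopologicalSpace α] [OrderClosedTopology α]
  [MeasurableSpace α] [BorelSpace α]

theorem measurable_measure_Ici (μ : Measure α) : Measurable fun x ↦ μ (Set.Ici x) :=
  Antitone.measurable fun _ _ hxy ↦ measure_mono (Set.Ici_subset_Ici.2 hxy)

theorem measurable_measure_Iic (μ : Measure α) : Measurable fun x ↦ μ (Set.Iic x) :=
  measurable_measure_Ici (α := αᵒᵈ) μ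

variable [SecondCountableTopology α]

theorem setLIntegral_measure_Ici_rpow_neg_le (μ : Measure α) (S : Set α) {a : ℝ} (ha₀ : 0 < a)
    (ha₁ : a < 1) :
    ∫⁻ x in S, μ (Set.Ici x) ^ (-a) ∂μ ≤ ENNReal.ofReal (1 - a)⁻¹ * μ S ^ (1 - a) := by
  simpa only [Measure.restrict_apply_univ] using
    lintegral_rpow_neg_le_of_forall_measure_lt_le (measurable_measure_Ici μ)
      (fun u ↦ (Measure.restrict_apply_le _ _).trans (measure_setOf_measure_Ici_lt_le μ u))
      ha₀ ha₁ (ρ := μ.restrict S)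

theorem setLIntegral_measure_Iic_rpow_neg_le (μ : Measure α) (S : Set α) {a : ℝ} (ha₀ : 0 < a)
    (ha₁ : a < 1) :
    ∫⁻ x in S, μ (Set.Iic x) ^ (-a) ∂μ ≤ ENNReal.ofReal (1 - a)⁻¹ * μ S ^ (1 - a) :=
  setLIntegral_measure_Ici_rpow_neg_le (α := αᵒᵈ) μ S ha₀ ha₁

end MeasureTails

section HolderConjugate

variable {p p' : ℝ}

theorem rpow_one_div_mul_rpow_one_div_rpow (hpq : p.HolderConjugate p') (x y : ℝ≥0∞) :
    (x ^ (1 / p) * y ^ (1 / p')) ^ p = x * y ^ (p - 1) := by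
  rw [ENNReal.mul_rpow_of_nonneg _ _ hpq.nonneg, ← ENNReal.rpow_mul, ← ENNReal.rpow_mul,
    one_div_mul_cancel hpq.ne_zero, one_div_mul_eq_div, hpq.div_conj_eq_sub_one,
    ENNReal.rpow_one]

theorem rpow_eq_rpow_sub_one_mul (hp : 1 ≤ p) (x : ℝ≥0∞) : x ^ p = x ^ (p - 1) * x := by
  simpa using ENNReal.rpow_add_of_nonneg (x := x) (p - 1) 1 (sub_nonneg.2 hp) zero_le_one

theorem ofReal_rpow_one_div_mul_rpow_one_div_mul_rpow (hpq : p.HolderConjugate p')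
    (A : ℝ≥0∞) :
    (ENNReal.ofReal (p' ^ (1 / p') * p ^ (1 / p)) * A) ^ p =
      (ENNReal.ofReal p' * A) ^ (p - 1) * (ENNReal.ofReal p * A) := by
  rw [mul_comm (p' ^ (1 / p')), ENNReal.ofReal_mul (Real.rpow_nonneg hpq.nonneg _),
    ← ENNReal.ofReal_rpow_of_pos hpq.pos, ← ENNReal.ofReal_rpow_of_pos hpq.symm.pos,
    ENNReal.mul_rpow_of_nonneg _ _ hpq.nonneg, rpow_one_div_mul_rpow_one_div_rpow hpq,
    ENNReal.mul_rpow_of_nonneg _ _ hpq.sub_one_pos.le, rpow_eq_rpow_sub_one_mul hpq.lt.le]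
  ring

theorem iSup_rpow {ι : Sort*} (f : ι → ℝ≥0∞) {z : ℝ} (hz : 0 < z) :
    (⨆ i, f i) ^ z = ⨆ i, f i ^ z :=
  (ENNReal.orderIsoRpow z hz).map_iSup f

theorem mul_rpow_le_self_of_le_rpow_neg (hpq : p.HolderConjugate p') {g w : ℝ≥0∞}
    (hg : g ≤ w ^ (-(p' / p))) : w * g ^ p ≤ g := by
  have hp : p ≠ 0 := hpq.ne_zero
  have hp' : p' ≠ 0 := hpq.symm.ne_zero
  have hexp : -(p' / p) * (p - 1) = -1 := by
    rw [← hpq.div_conj_eq_sub_one]; field_simp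
  calc
    w * g ^ p = w * g ^ (p - 1) * g := by
      rw [rpow_eq_rpow_sub_one_mul hpq.lt.le, mul_assoc]
    _ ≤ w * (w ^ (-(p' / p))) ^ (p - 1) * g := by
      gcongr
      exact hpq.sub_one_pos.le
    _ = w * w⁻¹ * g := by rw [← ENNReal.rpow_mul, hexp, ENNReal.rpow_neg_one]
    _ ≤ 1 * g := by gcongr; exact ENNReal.mul_inv_le_one w
    _ = g := one_mul g

theorem lintegral_rpow_le_lintegral_weight_mul {X : Type*} [MeasurableSpace X] {ρ : Measure X}
    (hpq : p.HolderConjugate p') {f ω : X → ℝ≥0∞} (hf : AEMeasurable f ρ)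
    (hω : AEMeasurable ω ρ) (hω₀ : ∀ᵐ x ∂ρ, ω x ≠ 0) (hω_top : ∀ᵐ x ∂ρ, ω x ≠ ⊤) :
    (∫⁻ x, f x ∂ρ) ^ p ≤
      (∫⁻ x, ω x * f x ^ p ∂ρ) * (∫⁻ x, ω x ^ (-(p' / p)) ∂ρ) ^ (p - 1) := by
  have hsplit : ∀ᵐ x ∂ρ, f x = (ω x ^ (1 / p) * f x) * ω x ^ (-(1 / p)) := by
    filter_upwards [hω₀, hω_top] with x hx₀ hx_top
    rw [mul_right_comm, ← ENNReal.rpow_add _ _ hx₀ hx_top, add_neg_cancel, ENNReal.rpow_zero,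
      one_mul]
  have hholder := ENNReal.lintegral_mul_le_Lp_mul_Lq ρ hpq ((hω.pow_const (1 / p)).mul hf)
    (hω.pow_const (-(1 / p)))
  calc
    (∫⁻ x, f x ∂ρ) ^ p
      ≤ ((∫⁻ x, (ω x ^ (1 / p) * f x) ^ p ∂ρ) ^ (1 / p) *
          (∫⁻ x, (ω x ^ (-(1 / p))) ^ p' ∂ρ) ^ (1 / p')) ^ p := by
        rw [lintegral_congr_ae hsplit]
        exact ENNReal.rpow_le_rpow hholder hpq.nonneg
    _ = (∫⁻ x, (ω x ^ (1 / p) * f x) ^ p ∂ρ) *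
          (∫⁻ x, (ω x ^ (-(1 / p))) ^ p' ∂ρ) ^ (p - 1) :=
        rpow_one_div_mul_rpow_one_div_rpow hpq _ _
    _ = _ := by
        simp_rw [ENNReal.mul_rpow_of_nonneg _ _ hpq.nonneg, ← ENNReal.rpow_mul, neg_mul,
          one_div_mul_eq_div, div_self hpq.ne_zero, ENNReal.rpow_one]

end HolderConjugate

theorem lintegral_mul_setLIntegral_lt_swap {α X : Type*} [LinearOrder α] [TopologicalSpace α]
    [OrderClosedTopology α] [SecondCountableTopology α] [MeasurableSpace α]
    [OpensMeasurableSpace α] [MeasurableSpace X] {N : X → α} (hN : Measurable N)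
    (μ : Measure α) [SFinite μ] (ρ : Measure X) [SFinite ρ] {g : α → ℝ≥0∞} (hg : Measurable g)
    {G : X → ℝ≥0∞} (hG : Measurable G) :
    ∫⁻ s, g s * ∫⁻ t in N ⁻¹' Set.Iio s, G t ∂ρ ∂μ =
      ∫⁻ t, G t * ∫⁻ s in Set.Ioi (N t), g s ∂μ ∂ρ := by
  let K : α × X → ℝ≥0∞ := {z | N z.2 < z.1}.indicator fun z ↦ g z.1 * G z.2
  have hK : Measurable K := ((hg.comp measurable_fst).mul (hG.comp measurable_snd)).indicator
    (measurableSet_lt (hN.comp measurable_snd) measurable_fst)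
  calc
    _ = ∫⁻ s, ∫⁻ t, K (s, t) ∂ρ ∂μ := by
      refine lintegral_congr fun s ↦ ?_
      rw [← lintegral_const_mul _ hG, ← lintegral_indicator (hN measurableSet_Iio)]
      rfl
    _ = ∫⁻ t, ∫⁻ s, K (s, t) ∂μ ∂ρ := lintegral_lintegral_swap hK.aemeasurable
    _ = _ := by
      refine lintegral_congr fun t ↦ ?_
      rw [← lintegral_const_mul _ hg, ← lintegral_indicator measurableSet_Ioi]
      simp_rw [mul_comm (G t)]
      rfl

theorem exists_seq_lintegral_ne_top_iSup_eq {X : Type*} [MeasurableSpace X] (ρ : Measure X)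
    [SigmaFinite ρ] {h : X → ℝ≥0∞} (hh : Measurable h) :
    ∃ g : ℕ → X → ℝ≥0∞, (∀ n, Measurable (g n)) ∧ (∀ n, g n ≤ h) ∧
      (∀ n, ∫⁻ x, g n x ∂ρ ≠ ⊤) ∧ ⨆ n, ∫⁻ x, g n x ∂ρ = ∫⁻ x, h x ∂ρ := by
  let g : ℕ → X → ℝ≥0∞ := fun n ↦ (spanningSets ρ n).indicator fun x ↦ min (h x) n
  have hgm (n : ℕ) : Measurable (g n) :=
    (hh.min measurable_const).indicator (measurableSet_spanningSets ρ n)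
  have hmono : Monotone g := fun m n hmn x ↦
    (Set.indicator_le_indicator (by gcongr)).trans
      (Set.indicator_le_indicator_of_subset (monotone_spanningSets ρ hmn) (fun _ ↦ zero_le) x)
  have hle (n : ℕ) : g n ≤ h := fun x ↦ (Set.indicator_le_self _ _ x).trans (min_le_left _ _)
  refine ⟨g, hgm, hle, fun n ↦ ?_, ?_⟩
  · have hbound : ∫⁻ x, g n x ∂ρ ≤ n * ρ (spanningSets ρ n) := by
      rw [lintegral_indicator (measurableSet_spanningSets ρ n), ← setLIntegral_const]
      exact lintegral_mono fun x ↦ min_le_right _ _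
    exact ne_top_of_le_ne_top (ENNReal.mul_ne_top (ENNReal.natCast_ne_top n)
      (measure_spanningSets_lt_top ρ n).ne) hbound
  · rw [← lintegral_iSup hgm hmono]
    refine lintegral_congr fun x ↦ le_antisymm (iSup_le fun n ↦ hle n x) ?_
    have hmin : h x = ⨆ n : ℕ, min (h x) n := by
      rw [← inf_iSup_eq, ENNReal.iSup_natCast, inf_top_eq]
    rw [hmin]
    refine iSup_le fun n ↦ le_iSup_of_le (max n (spanningSetsIndex ρ x)) ?_
    have hx : x ∈ spanningSets ρ (max n (spanningSetsIndex ρ x)) :=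
      mem_spanningSets_of_index_le ρ x (le_max_right _ _)
    refine le_trans ?_ (Set.indicator_of_mem hx _).ge
    gcongr
    exact le_max_left _ _

section Hardy

variable {α X : Type*} [MeasurableSpace α] [MeasurableSpace X]

/-- The distribution under `N` of the dual weight `ψ ^ (-q)`; in the Hardy inequality with
exponent `p` and weight `ψ` one takes `q = p' / p`. Since `0 ^ (-q) = ∞`, it charges the zeros
of `ψ` with infinite density. -/
noncomputable def dualMeasure (N : X → α) (ρ : Measure X) (ψ : X → ℝ≥0∞) (q : ℝ) : Measure α :=
  (ρ.withDensity fun x ↦ ψ x ^ (-q)).map N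

theorem dualMeasure_apply {N : X → α} (hN : Measurable N) (ρ : Measure X) (ψ : X → ℝ≥0∞) (q : ℝ)
    {S : Set α} (hS : MeasurableSet S) :
    dualMeasure N ρ ψ q S = ∫⁻ x in N ⁻¹' S, ψ x ^ (-q) ∂ρ := by
  rw [dualMeasure, Measure.map_apply hN hS, withDensity_apply _ (hN hS)]

theorem setLIntegral_dualMeasure {N : X → α} (hN : Measurable N) {ρ : Measure X} {ψ : X → ℝ≥0∞}
    (hψ : Measurable ψ) (q : ℝ) {S : Set α} (hS : MeasurableSet S) {g : α → ℝ≥0∞}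
    (hg : Measurable g) :
    ∫⁻ x in S, g x ∂dualMeasure N ρ ψ q = ∫⁻ t in N ⁻¹' S, ψ t ^ (-q) * g (N t) ∂ρ := by
  rw [dualMeasure, setLIntegral_map hS hg hN]
  exact setLIntegral_withDensity_eq_setLIntegral_mul _ (hψ.pow_const _) (hg.comp hN) (hN hS)

variable [LinearOrder α]

/-- The weighted Hardy inequality with constant `C`. The inner integral is taken with respect to
`ρ` over the sublevel set `{N < s}` of a function `N` on an arbitrary measurable space `X`; the
Hardy inequality on `(0, ∞)` is the case where `N` is the identity and `ρ` is Lebesgue measure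
on `(0, ∞)`. -/
def HardyInequality (N : X → α) (ρ : Measure X) (μ : Measure α) (ν : Measure X) (p : ℝ)
    (C : ℝ≥0∞) : Prop :=
  ∀ f : X → ℝ≥0∞, Measurable f →
    ∫⁻ s, (∫⁻ t in N ⁻¹' Set.Iio s, f t ∂ρ) ^ p ∂μ ≤ C ^ p * ∫⁻ x, f x ^ p ∂ν

/-- Muckenhoupt's constant `sup_r μ([r, ∞)) ^ (1 / p) * κ((-∞, r)) ^ (1 / p')` of two measures,
where `κ` is the `dualMeasure` in the application to the Hardy inequality. -/
noncomputable def muckenhouptConst (μ κ : Measure α) (p p' : ℝ) : ℝ≥0∞ :=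
  ⨆ r, μ (Set.Ici r) ^ (1 / p) * κ (Set.Iio r) ^ (1 / p')

section Singular

variable {N : X → α} {ρ ν σ : Measure X} {μ : Measure α} {p : ℝ} {C : ℝ≥0∞}

theorem hardyInequality_add_iff_of_mutuallySingular (hp : 0 < p) (hν : ν ≪ ρ)
    (hσ : σ.MutuallySingular ρ) :
    HardyInequality N ρ μ (ν + σ) p C ↔ HardyInequality N ρ μ ν p C := by
  refine ⟨fun H f hf ↦ ?_, fun H f hf ↦ (H f hf).trans ?_⟩
  · have hE : MeasurableSet hσ.nullSet := hσ.measurableSet_nullSet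
    have hρ : hσ.nullSet.indicator f =ᵐ[ρ] f := by
      filter_upwards [measure_eq_zero_iff_ae_notMem.1 hσ.measure_compl_nullSet] with x hx
      exact Set.indicator_of_mem (not_not.1 hx) f
    have hσ₀ : ∀ᵐ x ∂σ, hσ.nullSet.indicator f x ^ p = 0 := by
      filter_upwards [measure_eq_zero_iff_ae_notMem.1 hσ.measure_nullSet] with x hx
      rw [Set.indicator_of_notMem hx, ENNReal.zero_rpow_of_pos hp]
    have hν_eq : ∀ᵐ x ∂ν, hσ.nullSet.indicator f x ^ p = f x ^ p := by
      filter_upwards [hν.ae_le hρ] with x hx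
      rw [hx]
    simpa only [lintegral_add_measure, lintegral_congr_ae hσ₀, lintegral_zero, add_zero,
      lintegral_congr_ae hν_eq, lintegral_congr_ae (ae_restrict_of_ae hρ)]
      using H _ (hf.indicator hE)
  · gcongr
    exact Measure.le_add_right le_rfl

end Singular

section Necessity

variable [TopologicalSpace α] [OrderClosedTopology α] [OpensMeasurableSpace α]
  {N : X → α} {ρ : Measure X} {μ : Measure α} {ψ : X → ℝ≥0∞} {p p' : ℝ} {C : ℝ≥0∞}

theorem HardyInequality.measure_Ici_mul_setLIntegral_le
    (H : HardyInequality N ρ μ (ρ.withDensity ψ) p C) (hN : Measurable N)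
    (hpq : p.HolderConjugate p') (hψ : Measurable ψ) {g : X → ℝ≥0∞} (hg : Measurable g)
    (hgψ : ∀ x, g x ≤ ψ x ^ (-(p' / p))) {r : α}
    (hg_top : ∫⁻ x in N ⁻¹' Set.Iio r, g x ∂ρ ≠ ⊤) :
    μ (Set.Ici r) ^ (1 / p) * (∫⁻ x in N ⁻¹' Set.Iio r, g x ∂ρ) ^ (1 / p') ≤ C := by
  set I := ∫⁻ x in N ⁻¹' Set.Iio r, g x ∂ρ with hI
  let f : X → ℝ≥0∞ := (N ⁻¹' Set.Iio r).indicator g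
  have hf : Measurable f := hg.indicator (hN measurableSet_Iio)
  have hinner : ∀ s ∈ Set.Ici r, ∫⁻ t in N ⁻¹' Set.Iio s, f t ∂ρ = I := fun s hs ↦ by
    rw [setLIntegral_indicator (hN measurableSet_Iio), ← Set.preimage_inter,
      Set.inter_eq_left.2 (Set.Iio_subset_Iio hs)]
  have hleft : μ (Set.Ici r) * I ^ p ≤ ∫⁻ s, (∫⁻ t in N ⁻¹' Set.Iio s, f t ∂ρ) ^ p ∂μ := by
    rw [mul_comm, ← setLIntegral_const]
    refine le_trans (setLIntegral_mono' measurableSet_Ici fun s hs ↦ ?_) (setLIntegral_le_lintegral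
      (Set.Ici r) _)
    rw [hinner s hs]
  have hright : ∫⁻ x, f x ^ p ∂ρ.withDensity ψ ≤ I := by
    rw [lintegral_withDensity_eq_lintegral_mul _ hψ (hf.pow_const p), hI,
      ← lintegral_indicator (hN measurableSet_Iio)]
    refine lintegral_mono fun x ↦ mul_rpow_le_self_of_le_rpow_neg hpq ?_
    exact (Set.indicator_le_self _ _ x).trans (hgψ x)
  have hmul : μ (Set.Ici r) * I ^ (p - 1) * I ≤ C ^ p * I := by
    rw [mul_assoc, ← rpow_eq_rpow_sub_one_mul hpq.lt.le]
    exact hleft.trans ((H f hf).trans (by gcongr))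
  rcases eq_or_ne I 0 with hI₀ | hI₀
  · simp [hI₀, ENNReal.zero_rpow_of_pos hpq.symm.inv_pos]
  · rw [← ENNReal.rpow_le_rpow_iff hpq.pos, rpow_one_div_mul_rpow_one_div_rpow hpq]
    exact (ENNReal.mul_le_mul_iff_left hI₀ hg_top).1 hmul

theorem HardyInequality.muckenhouptConst_le [SigmaFinite ρ]
    (H : HardyInequality N ρ μ (ρ.withDensity ψ) p C) (hN : Measurable N)
    (hpq : p.HolderConjugate p') (hψ : Measurable ψ) :
    muckenhouptConst μ (dualMeasure N ρ ψ (p' / p)) p p' ≤ C := by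
  refine iSup_le fun r ↦ ?_
  obtain ⟨g, hg, hgψ, hg_top, hsup⟩ := exists_seq_lintegral_ne_top_iSup_eq
    (ρ.restrict (N ⁻¹' Set.Iio r)) (hψ.pow_const (-(p' / p)))
  rw [dualMeasure_apply hN _ _ _ measurableSet_Iio, ← hsup, iSup_rpow _ hpq.symm.one_div_pos,
    ENNReal.mul_iSup]
  exact iSup_le fun n ↦ H.measure_Ici_mul_setLIntegral_le hN hpq hψ (hg n) (hgψ n) (hg_top n)

end Necessity

section Muckenhoupt

theorem measure_Ici_mul_measure_Iio_le_muckenhouptConst (μ κ : Measure α) (p p' : ℝ) (r : α) :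
    μ (Set.Ici r) ^ (1 / p) * κ (Set.Iio r) ^ (1 / p') ≤ muckenhouptConst μ κ p p' :=
  le_iSup (fun r ↦ μ (Set.Ici r) ^ (1 / p) * κ (Set.Iio r) ^ (1 / p')) r

theorem muckenhouptConst_mono_left {μ₁ μ₂ : Measure α} (hμ : μ₁ ≤ μ₂) (κ : Measure α) {p : ℝ}
    (hp : 0 ≤ p) (p' : ℝ) : muckenhouptConst μ₁ κ p p' ≤ muckenhouptConst μ₂ κ p p' := by
  refine iSup_mono fun r ↦ ?_
  gcongr

variable {μ κ : Measure α} {p p' : ℝ}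

theorem measure_Ici_ne_top_of_muckenhouptConst_ne_top (hp : 0 < p)
    (hp' : 0 ≤ p') (hA : muckenhouptConst μ κ p p' ≠ ⊤) {r : α} (hr : κ (Set.Iio r) ≠ 0) :
    μ (Set.Ici r) ≠ ⊤ := by
  intro htop
  have hle := measure_Ici_mul_measure_Iio_le_muckenhouptConst μ κ p p' r
  rw [htop, ENNReal.top_rpow_of_pos (one_div_pos.2 hp), ENNReal.top_mul] at hle
  · exact hA (top_le_iff.1 hle)
  · simp [ENNReal.rpow_eq_zero_iff, hr, hp']

theorem measure_Iio_rpow_le_muckenhouptConst_mul (hp : 0 < p) (hp' : 0 < p')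
    (hA : muckenhouptConst μ κ p p' ≠ ⊤) {r : α} (hr : μ (Set.Ici r) ≠ 0) :
    κ (Set.Iio r) ^ (1 / p') ≤ muckenhouptConst μ κ p p' * μ (Set.Ici r) ^ (-(1 / p)) := by
  rcases eq_or_ne (κ (Set.Iio r)) 0 with hκ | hκ
  · simp [hκ, hp']
  have hpos : 0 < 1 / p := one_div_pos.2 hp
  have hμ_top : μ (Set.Ici r) ^ (1 / p) ≠ ⊤ := ENNReal.rpow_ne_top_of_nonneg hpos.le
    (measure_Ici_ne_top_of_muckenhouptConst_ne_top hp hp'.le hA hκ)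
  have hμ₀ : μ (Set.Ici r) ^ (1 / p) ≠ 0 := (ENNReal.rpow_eq_zero_iff_of_pos hpos).not.2 hr
  rw [ENNReal.rpow_neg, ← div_eq_mul_inv, ENNReal.le_div_iff_mul_le (.inl hμ₀) (.inl hμ_top),
    mul_comm]
  exact measure_Ici_mul_measure_Iio_le_muckenhouptConst μ κ p p' r

theorem measure_Iio_ne_top_of_muckenhouptConst_ne_top (hp : 0 < p) (hp' : 0 < p')
    (hA : muckenhouptConst μ κ p p' ≠ ⊤) {r : α} (hr : μ (Set.Ici r) ≠ 0) :
    κ (Set.Iio r) ≠ ⊤ := by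
  have hbound : κ (Set.Iio r) ^ (1 / p') ≠ ⊤ := ne_top_of_le_ne_top
    (ENNReal.mul_ne_top hA (by simp [ENNReal.rpow_eq_top_iff, hr, hp.le]))
    (measure_Iio_rpow_le_muckenhouptConst_mul hp hp' hA hr)
  exact (ENNReal.rpow_eq_top_iff_of_pos (one_div_pos.2 hp')).not.1 hbound

variable [TopologicalSpace α] [OrderClosedTopology α] [SecondCountableTopology α]

theorem measure_Ioi_mul_measure_Iic_le_muckenhouptConst (μ κ : Measure α) (hp : 0 < p)
    (hp' : 0 ≤ p') (t : α) :
    μ (Set.Ioi t) ^ (1 / p) * κ (Set.Iic t) ^ (1 / p') ≤ muckenhouptConst μ κ p p' := by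
  rw [measure_eq_iSup_measure_Ici_of_isUpperSet μ (isUpperSet_Ioi t)]
  simp_rw [iSup_rpow _ (one_div_pos.2 hp), ENNReal.iSup_mul]
  refine iSup₂_le fun r hr ↦ le_trans ?_
    (measure_Ici_mul_measure_Iio_le_muckenhouptConst μ κ p p' r)
  gcongr
  exact hr

theorem setLIntegral_Ioi_measure_Ici_rpow_mul_le_muckenhouptConst [BorelSpace α] (μ κ : Measure α)
    (hpq : p.HolderConjugate p') (t : α) :
    (∫⁻ s in Set.Ioi t, μ (Set.Ici s) ^ (-(1 / p')) ∂μ) * κ (Set.Iic t) ^ (1 / p') ≤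
      ENNReal.ofReal p * muckenhouptConst μ κ p p' := by
  have hexp : 1 - 1 / p' = 1 / p := by simpa only [one_div] using hpq.symm.one_sub_inv
  calc
    _ ≤ ENNReal.ofReal (1 - 1 / p')⁻¹ * μ (Set.Ioi t) ^ (1 - 1 / p') *
          κ (Set.Iic t) ^ (1 / p') := by
      gcongr
      exact setLIntegral_measure_Ici_rpow_neg_le μ _ hpq.symm.one_div_pos
        (by simpa only [one_div] using inv_lt_one_of_one_lt₀ hpq.symm.lt)
    _ ≤ _ := by
      rw [hexp, one_div, inv_inv, mul_assoc, ← one_div]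
      gcongr
      exact measure_Ioi_mul_measure_Iic_le_muckenhouptConst μ κ hpq.pos hpq.symm.nonneg t

end Muckenhoupt

section DualMeasure

variable {N : X → α} {ρ : Measure X} {ψ : X → ℝ≥0∞} {q : ℝ}

theorem absolutelyContinuous_withDensity_rpow_neg (hψ : Measurable ψ)
    (hψ_top : ∀ᵐ x ∂ρ, ψ x ≠ ⊤) (hq : 0 < q) :
    ρ ≪ ρ.withDensity fun x ↦ ψ x ^ (-q) := by
  refine withDensity_absolutelyContinuous' (hψ.pow_const _).aemeasurable ?_
  filter_upwards [hψ_top] with x hx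
  simp [ENNReal.rpow_eq_zero_iff, hx, hq.not_gt]

variable [TopologicalSpace α] [OrderClosedTopology α]

theorem setLIntegral_eq_zero_of_dualMeasure_Iio_eq_zero [OpensMeasurableSpace α]
    (hN : Measurable N) (hψ : Measurable ψ)
    (hψ_top : ∀ᵐ x ∂ρ, ψ x ≠ ⊤) (hq : 0 < q) {s : α} (hs : dualMeasure N ρ ψ q (Set.Iio s) = 0)
    (f : X → ℝ≥0∞) : ∫⁻ t in N ⁻¹' Set.Iio s, f t ∂ρ = 0 := by
  rw [dualMeasure, Measure.map_apply hN measurableSet_Iio] at hs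
  exact setLIntegral_measure_zero _ _ (absolutelyContinuous_withDensity_rpow_neg hψ hψ_top hq hs)

theorem ae_restrict_ne_zero_of_dualMeasure_Iio_ne_top [OpensMeasurableSpace α] (hN : Measurable N)
    (hψ : Measurable ψ) (hq : 0 < q) {s : α} (hs : dualMeasure N ρ ψ q (Set.Iio s) ≠ ⊤) :
    ∀ᵐ t ∂ρ.restrict (N ⁻¹' Set.Iio s), ψ t ≠ 0 := by
  rw [dualMeasure_apply hN ρ ψ _ measurableSet_Iio] at hs
  filter_upwards [ae_lt_top (hψ.pow_const _) hs] with t ht hψt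
  rw [hψt, ENNReal.zero_rpow_of_neg (neg_lt_zero.2 hq)] at ht
  exact ht.ne rfl

variable [SecondCountableTopology α]

theorem ae_dualMeasure_Iic_ne_zero (hN : Measurable N) (hψ : Measurable ψ)
    (hψ_top : ∀ᵐ x ∂ρ, ψ x ≠ ⊤) (hq : 0 < q) :
    ∀ᵐ t ∂ρ, dualMeasure N ρ ψ q (Set.Iic (N t)) ≠ 0 :=
  (absolutelyContinuous_withDensity_rpow_neg hψ hψ_top hq).ae_le <|
    ae_of_ae_map hN.aemeasurable <| ae_ne_zero_of_forall_measure_lt_le <|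
      measure_setOf_measure_Iic_lt_le (dualMeasure N ρ ψ q)

theorem setLIntegral_rpow_neg_mul_dualMeasure_Iic_rpow_neg_le [BorelSpace α] (hN : Measurable N)
    (hψ : Measurable ψ) {a : ℝ} (ha₀ : 0 < a) (ha₁ : a < 1) (s : α) :
    ∫⁻ t in N ⁻¹' Set.Iio s, ψ t ^ (-q) * dualMeasure N ρ ψ q (Set.Iic (N t)) ^ (-a) ∂ρ ≤
      ENNReal.ofReal (1 - a)⁻¹ * dualMeasure N ρ ψ q (Set.Iio s) ^ (1 - a) := by
  rw [← setLIntegral_dualMeasure hN hψ q measurableSet_Iio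
    ((measurable_measure_Iic (dualMeasure N ρ ψ q)).pow_const (-a))]
  exact setLIntegral_measure_Iic_rpow_neg_le _ _ ha₀ ha₁

end DualMeasure

section Sufficiency

/-- The weight `ω = ψ * κ {y ≤ N t} ^ (1 / p')`, with `κ` the dual measure, which is split off by
Hölder's inequality in the proof of the Hardy inequality. -/
noncomputable def hardyWeight (N : X → α) (ρ : Measure X) (ψ : X → ℝ≥0∞) (p p' : ℝ) (t : X) :
    ℝ≥0∞ :=
  ψ t * dualMeasure N ρ ψ (p' / p) (Set.Iic (N t)) ^ (1 / p')

variable [TopologicalSpace α] [OrderClosedTopology α]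
  {N : X → α} {ρ : Measure X} {μ : Measure α} {ψ : X → ℝ≥0∞} {p p' : ℝ}

theorem measurable_hardyWeight [BorelSpace α] (hN : Measurable N) (hψ : Measurable ψ) :
    Measurable (hardyWeight N ρ ψ p p') :=
  hψ.mul (((measurable_measure_Iic _).comp hN).pow_const _)

theorem ae_hardyWeight_ne_top [OpensMeasurableSpace α] (hpq : p.HolderConjugate p')
    (hN : Measurable N) (hψ_top : ∀ᵐ x ∂ρ, ψ x ≠ ⊤) {s : α}
    (hs : dualMeasure N ρ ψ (p' / p) (Set.Iio s) ≠ ⊤) :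
    ∀ᵐ t ∂ρ.restrict (N ⁻¹' Set.Iio s), hardyWeight N ρ ψ p p' t ≠ ⊤ := by
  filter_upwards [ae_restrict_of_ae hψ_top, ae_restrict_mem (hN measurableSet_Iio)] with t hψt ht
  exact ENNReal.mul_ne_top hψt <| ENNReal.rpow_ne_top_of_nonneg hpq.symm.one_div_pos.le <|
    ne_top_of_le_ne_top hs <| measure_mono <| Set.Iic_subset_Iio.2 ht

variable [SecondCountableTopology α]

theorem ae_hardyWeight_ne_zero [OpensMeasurableSpace α] (hpq : p.HolderConjugate p')
    (hN : Measurable N) (hψ : Measurable ψ) (hψ_top : ∀ᵐ x ∂ρ, ψ x ≠ ⊤) {s : α}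
    (hs : dualMeasure N ρ ψ (p' / p) (Set.Iio s) ≠ ⊤) :
    ∀ᵐ t ∂ρ.restrict (N ⁻¹' Set.Iio s), hardyWeight N ρ ψ p p' t ≠ 0 := by
  have hq : 0 < p' / p := div_pos hpq.symm.pos hpq.pos
  filter_upwards [ae_restrict_ne_zero_of_dualMeasure_Iio_ne_top hN hψ hq hs,
    ae_restrict_of_ae (ae_dualMeasure_Iic_ne_zero hN hψ hψ_top hq)] with t hψt hκt
  exact mul_ne_zero hψt ((ENNReal.rpow_eq_zero_iff_of_pos hpq.symm.one_div_pos).not.2 hκt)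

variable [BorelSpace α]

theorem setLIntegral_hardyWeight_rpow_neg_le (hpq : p.HolderConjugate p') (hN : Measurable N)
    (hψ : Measurable ψ) (hψ_top : ∀ᵐ x ∂ρ, ψ x ≠ ⊤) {s : α}
    (hs : dualMeasure N ρ ψ (p' / p) (Set.Iio s) ≠ ⊤) :
    ∫⁻ t in N ⁻¹' Set.Iio s, hardyWeight N ρ ψ p p' t ^ (-(p' / p)) ∂ρ ≤
      ENNReal.ofReal p' * dualMeasure N ρ ψ (p' / p) (Set.Iio s) ^ (1 / p') := by
  have hdual : ∀ᵐ t ∂ρ.restrict (N ⁻¹' Set.Iio s), hardyWeight N ρ ψ p p' t ^ (-(p' / p)) =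
      ψ t ^ (-(p' / p)) * dualMeasure N ρ ψ (p' / p) (Set.Iic (N t)) ^ (-(1 / p)) := by
    have hexp : 1 / p' * -(p' / p) = -(1 / p) := by
      have := hpq.symm.ne_zero
      field_simp
    filter_upwards [ae_hardyWeight_ne_zero hpq hN hψ hψ_top hs] with t ht
    rw [hardyWeight, ENNReal.mul_rpow_of_ne_zero (left_ne_zero_of_mul ht)
      (right_ne_zero_of_mul ht), ← ENNReal.rpow_mul, hexp]
  have hexp : 1 - 1 / p = 1 / p' := by simpa only [one_div] using hpq.one_sub_inv
  have hlt : 1 / p < 1 := by simpa only [one_div] using inv_lt_one_of_one_lt₀ hpq.lt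
  rw [lintegral_congr_ae hdual]
  simpa only [hexp, inv_div, div_one] using
    setLIntegral_rpow_neg_mul_dualMeasure_Iic_rpow_neg_le (q := p' / p) (ρ := ρ) hN hψ
      hpq.one_div_pos hlt s

theorem setLIntegral_rpow_le_setLIntegral_hardyWeight_mul (hpq : p.HolderConjugate p')
    (hN : Measurable N) (hψ : Measurable ψ) (hψ_top : ∀ᵐ x ∂ρ, ψ x ≠ ⊤)
    (hA : muckenhouptConst μ (dualMeasure N ρ ψ (p' / p)) p p' ≠ ⊤) {s : α}
    (hs : μ (Set.Ici s) ≠ 0) {f : X → ℝ≥0∞} (hf : Measurable f) :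
    (∫⁻ t in N ⁻¹' Set.Iio s, f t ∂ρ) ^ p ≤
      (ENNReal.ofReal p' * muckenhouptConst μ (dualMeasure N ρ ψ (p' / p)) p p') ^ (p - 1) *
        (μ (Set.Ici s) ^ (-(1 / p')) *
          ∫⁻ t in N ⁻¹' Set.Iio s, hardyWeight N ρ ψ p p' t * f t ^ p ∂ρ) := by
  have hp₁ : 0 ≤ p - 1 := hpq.sub_one_pos.le
  set κ := dualMeasure N ρ ψ (p' / p)
  set A := muckenhouptConst μ κ p p'
  set J := ∫⁻ t in N ⁻¹' Set.Iio s, hardyWeight N ρ ψ p p' t * f t ^ p ∂ρ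
  have hκ_top : κ (Set.Iio s) ≠ ⊤ :=
    measure_Iio_ne_top_of_muckenhouptConst_ne_top hpq.pos hpq.symm.pos hA hs
  have hexp : -(1 / p) * (p - 1) = -(1 / p') := by
    rw [← hpq.div_conj_eq_sub_one]
    have := hpq.ne_zero
    field_simp
  calc
    _ ≤ J * (∫⁻ t in N ⁻¹' Set.Iio s, hardyWeight N ρ ψ p p' t ^ (-(p' / p)) ∂ρ) ^ (p - 1) :=
      lintegral_rpow_le_lintegral_weight_mul hpq hf.aemeasurable
        (measurable_hardyWeight hN hψ).aemeasurable
        (ae_hardyWeight_ne_zero hpq hN hψ hψ_top hκ_top)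
        (ae_hardyWeight_ne_top hpq hN hψ_top hκ_top)
    _ ≤ J * (ENNReal.ofReal p' * κ (Set.Iio s) ^ (1 / p')) ^ (p - 1) := by
      gcongr
      exact setLIntegral_hardyWeight_rpow_neg_le hpq hN hψ hψ_top hκ_top
    _ ≤ J * (ENNReal.ofReal p' * (A * μ (Set.Ici s) ^ (-(1 / p)))) ^ (p - 1) := by
      gcongr
      exact measure_Iio_rpow_le_muckenhouptConst_mul hpq.pos hpq.symm.pos hA hs
    _ = _ := by
      rw [← mul_assoc, ENNReal.mul_rpow_of_nonneg _ _ hp₁, ← ENNReal.rpow_mul, hexp]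
      ring

theorem hardyWeight_mul_setLIntegral_Ioi_measure_Ici_rpow_le (hpq : p.HolderConjugate p') (t : X) :
    hardyWeight N ρ ψ p p' t * ∫⁻ s in Set.Ioi (N t), μ (Set.Ici s) ^ (-(1 / p')) ∂μ ≤
      ENNReal.ofReal p * muckenhouptConst μ (dualMeasure N ρ ψ (p' / p)) p p' * ψ t := by
  rw [hardyWeight, mul_assoc, mul_comm, mul_comm (_ ^ (1 / p'))]
  exact mul_le_mul_left
    (setLIntegral_Ioi_measure_Ici_rpow_mul_le_muckenhouptConst μ _ hpq (N t)) _

variable [SFinite ρ]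

theorem hardyInequality_muckenhouptConst_of_sFinite [SFinite μ] (hpq : p.HolderConjugate p')
    (hN : Measurable N) (hψ : Measurable ψ) (hψ_top : ∀ᵐ x ∂ρ, ψ x ≠ ⊤)
    (hA : muckenhouptConst μ (dualMeasure N ρ ψ (p' / p)) p p' ≠ ⊤) :
    HardyInequality N ρ μ (ρ.withDensity ψ) p (ENNReal.ofReal (p' ^ (1 / p') * p ^ (1 / p)) *
      muckenhouptConst μ (dualMeasure N ρ ψ (p' / p)) p p') := by
  intro f hf
  set A := muckenhouptConst μ (dualMeasure N ρ ψ (p' / p)) p p'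
  let G : X → ℝ≥0∞ := fun t ↦ hardyWeight N ρ ψ p p' t * f t ^ p
  have hG : Measurable G := (measurable_hardyWeight hN hψ).mul (hf.pow_const p)
  have hμ_meas : Measurable fun s ↦ μ (Set.Ici s) ^ (-(1 / p')) :=
    (measurable_measure_Ici μ).pow_const _
  calc
    _ ≤ ∫⁻ s, (ENNReal.ofReal p' * A) ^ (p - 1) *
          (μ (Set.Ici s) ^ (-(1 / p')) * ∫⁻ t in N ⁻¹' Set.Iio s, G t ∂ρ) ∂μ := by
      refine lintegral_mono_ae ?_
      filter_upwards [ae_ne_zero_of_forall_measure_lt_le (measure_setOf_measure_Ici_lt_le μ)]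
        with s hs
      exact setLIntegral_rpow_le_setLIntegral_hardyWeight_mul hpq hN hψ hψ_top hA hs hf
    _ = (ENNReal.ofReal p' * A) ^ (p - 1) *
          ∫⁻ t, G t * ∫⁻ s in Set.Ioi (N t), μ (Set.Ici s) ^ (-(1 / p')) ∂μ ∂ρ := by
      rw [lintegral_const_mul' _ _ (ENNReal.rpow_ne_top_of_nonneg hpq.sub_one_pos.le
        (ENNReal.mul_ne_top ENNReal.ofReal_ne_top hA)),
        lintegral_mul_setLIntegral_lt_swap hN μ ρ hμ_meas hG]
    _ ≤ (ENNReal.ofReal p' * A) ^ (p - 1) *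
          ∫⁻ t, ENNReal.ofReal p * A * (ψ t * f t ^ p) ∂ρ := by
      refine mul_le_mul_right (lintegral_mono fun t ↦ ?_) _
      rw [mul_right_comm, ← mul_assoc]
      exact mul_le_mul_left (hardyWeight_mul_setLIntegral_Ioi_measure_Ici_rpow_le hpq t) _
    _ = _ := by
      rw [lintegral_const_mul' _ _ (ENNReal.mul_ne_top ENNReal.ofReal_ne_top hA), ← mul_assoc,
        ← ofReal_rpow_one_div_mul_rpow_one_div_mul_rpow hpq,
        lintegral_withDensity_eq_lintegral_mul _ hψ (hf.pow_const p)]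
      rfl

theorem hardyInequality_muckenhouptConst (hpq : p.HolderConjugate p')
    (hN : Measurable N) (hψ : Measurable ψ) (hψ_top : ∀ᵐ x ∂ρ, ψ x ≠ ⊤)
    (hA : muckenhouptConst μ (dualMeasure N ρ ψ (p' / p)) p p' ≠ ⊤) :
    HardyInequality N ρ μ (ρ.withDensity ψ) p (ENNReal.ofReal (p' ^ (1 / p') * p ^ (1 / p)) *
      muckenhouptConst μ (dualMeasure N ρ ψ (p' / p)) p p') := by
  set κ := dualMeasure N ρ ψ (p' / p)
  let U : Set α := {s | κ (Set.Iio s) ≠ 0}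
  -- Off `U` the inner integral vanishes; on `U` finiteness of the constant makes `μ` σ-finite.
  have hU : IsUpperSet U := fun _ _ hst hs ↦
    (hs.bot_lt.trans_le (measure_mono (Set.Iio_subset_Iio hst))).ne'
  have hμU : SigmaFinite (μ.restrict U) := sigmaFinite_restrict_of_isUpperSet μ hU fun _ hs ↦
    measure_Ici_ne_top_of_muckenhouptConst_ne_top hpq.pos hpq.symm.nonneg hA hs
  have hAU : muckenhouptConst (μ.restrict U) κ p p' ≤ muckenhouptConst μ κ p p' :=
    muckenhouptConst_mono_left Measure.restrict_le_self κ hpq.nonneg p'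
  have hzero (f : X → ℝ≥0∞) (s : α) (hs : s ∉ U) : (∫⁻ t in N ⁻¹' Set.Iio s, f t ∂ρ) ^ p = 0 := by
    rw [setLIntegral_eq_zero_of_dualMeasure_Iio_eq_zero hN hψ hψ_top
      (div_pos hpq.symm.pos hpq.pos) (not_not.1 hs), ENNReal.zero_rpow_of_pos hpq.pos]
  intro f hf
  rw [← setLIntegral_eq_of_support_subset fun s hs ↦ not_not.1 fun hsU ↦ hs (hzero f s hsU)]
  refine (hardyInequality_muckenhouptConst_of_sFinite hpq hN hψ hψ_top
    (ne_top_of_le_ne_top hA hAU) f hf).trans ?_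
  gcongr
  exact hpq.nonneg

end Sufficiency

end Hardy

section PositiveReals

variable {μ : Measure ℝ} {p p' : ℝ}

theorem hardyInequality_id_restrict_Ioi_iff (hμ : μ (Set.Iic 0) = 0) {ν : Measure ℝ}
    (hν : ν (Set.Iic 0) = 0) {C : ℝ≥0∞} :
    HardyInequality id (volume.restrict (Set.Ioi 0)) μ ν p C ↔
      ∀ f : ℝ → ℝ≥0∞, Measurable f →
        ∫⁻ s in Set.Ioi 0, (∫⁻ t in Set.Ioo 0 s, f t) ^ p ∂μ ≤
          C ^ p * ∫⁻ x in Set.Ioi 0, f x ^ p ∂ν := by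
  have hrestrict {τ : Measure ℝ} (hτ : τ (Set.Iic 0) = 0) : τ.restrict (Set.Ioi 0) = τ :=
    Measure.restrict_eq_self_of_ae_mem <| by
      rw [← Set.compl_Iic]
      exact measure_eq_zero_iff_ae_notMem.1 hτ
  simp only [HardyInequality, Set.preimage_id, Measure.restrict_restrict measurableSet_Iio,
    Set.Iio_inter_Ioi, hrestrict hμ, hrestrict hν]

theorem muckenhouptConst_dualMeasure_id_restrict_Ioi (hp' : 0 < p') {ψ : ℝ → ℝ≥0∞} (q : ℝ) :
    muckenhouptConst μ (dualMeasure id (volume.restrict (Set.Ioi 0)) ψ q) p p' =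
      ⨆ r ∈ Set.Ioi (0 : ℝ), μ (Set.Ici r) ^ (1 / p) *
        (∫⁻ x in Set.Ioo 0 r, ψ x ^ (-q)) ^ (1 / p') := by
  refine iSup_congr fun r ↦ ?_
  rw [dualMeasure_apply measurable_id _ _ _ measurableSet_Iio, Set.preimage_id,
    Measure.restrict_restrict measurableSet_Iio, Set.Iio_inter_Ioi]
  rcases lt_or_ge 0 r with hr | hr
  · rw [iSup_pos (Set.mem_Ioi.2 hr)]
  · simp [hr.not_gt, hp']

end PositiveReals

theorem weighted_hardy_inequality_general {α X : Type*} [LinearOrder α] [TopologicalSpace α]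
    [OrderClosedTopology α] [SecondCountableTopology α] [MeasurableSpace α] [BorelSpace α]
    [MeasurableSpace X] {N : X → α} (hN : Measurable N)
    (ρ : Measure X) [SigmaFinite ρ] (μ : Measure α) {ψ : X → ℝ≥0∞} (hψ : Measurable ψ)
    (hψ_top : ∀ᵐ x ∂ρ, ψ x ≠ ⊤) {σ : Measure X} (hσ : σ.MutuallySingular ρ) {p p' : ℝ}
    (hpq : p.HolderConjugate p') {B : ℝ≥0∞}
    (hB : B = muckenhouptConst μ (dualMeasure N ρ ψ (p' / p)) p p') :
    ((∃ C, C ≠ ⊤ ∧ HardyInequality N ρ μ (ρ.withDensity ψ + σ) p C) ↔ B ≠ ⊤) ∧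
      (∀ C, HardyInequality N ρ μ (ρ.withDensity ψ + σ) p C → B ≤ C) ∧
      (B ≠ ⊤ → HardyInequality N ρ μ (ρ.withDensity ψ + σ) p
        (ENNReal.ofReal (p' ^ (1 / p') * p ^ (1 / p)) * B)) := by
  subst hB
  simp_rw [hardyInequality_add_iff_of_mutuallySingular hpq.pos
    (withDensity_absolutelyContinuous ρ ψ) hσ]
  have necessity (C : ℝ≥0∞) (H : HardyInequality N ρ μ (ρ.withDensity ψ) p C) :=
    H.muckenhouptConst_le hN hpq hψ
  have sufficiency := hardyInequality_muckenhouptConst (μ := μ) hpq hN hψ hψ_top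
  exact ⟨⟨fun ⟨C, hC, H⟩ ↦ ne_top_of_le_ne_top hC (necessity C H),
    fun hA ↦ ⟨_, ENNReal.mul_ne_top ENNReal.ofReal_ne_top hA, sufficiency hA⟩⟩,
    necessity, sufficiency⟩

/-- The weighted Hardy inequality on `(0,+∞)` (Muckenhoupt's characterization): there is a
finite constant `C` such that `∫ (∫_{(0,s)} f dt)^p dμ(s) ≤ C^p ∫ f^p dν` for all nonnegative
Borel `f` iff `B := sup_{r>0} μ([r,∞))^{1/p} (∫_{(0,r)} ψ^{-p'/p} dx)^{1/p'}` is finite;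
moreover every admissible `C` satisfies `B ≤ C`, and `(p')^{1/p'} p^{1/p} B` is admissible. -/
theorem weighted_hardy_inequality
    (μ ν : Measure ℝ) [SigmaFinite ν]
    (hμ0 : μ (Set.Iic 0) = 0) (hν0 : ν (Set.Iic 0) = 0)
    (ψ : ℝ → ℝ≥0) (hψ : Measurable ψ)
    (σ : Measure ℝ) (hσ : σ.MutuallySingular (volume.restrict (Set.Ioi 0)))
    (hdec : ν = (volume.restrict (Set.Ioi 0)).withDensity (fun x => (ψ x : ℝ≥0∞)) + σ)
    (p p' : ℝ) (hp : 1 < p) (hp' : p' = p / (p - 1))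
    (B : ℝ≥0∞)
    (hB : B = ⨆ r ∈ Set.Ioi (0 : ℝ), μ (Set.Ici r) ^ (1 / p) *
      (∫⁻ x in Set.Ioo 0 r, ((ψ x : ℝ≥0∞)) ^ (-(p' / p))) ^ (1 / p')) :
    ((∃ C : ℝ≥0∞, C ≠ ⊤ ∧ ∀ f : ℝ → ℝ≥0∞, Measurable f →
        ∫⁻ s in Set.Ioi 0, (∫⁻ t in Set.Ioo 0 s, f t) ^ p ∂μ ≤
          C ^ p * ∫⁻ x in Set.Ioi 0, f x ^ p ∂ν) ↔ B ≠ ⊤) ∧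
    (∀ C : ℝ≥0∞, (∀ f : ℝ → ℝ≥0∞, Measurable f →
        ∫⁻ s in Set.Ioi 0, (∫⁻ t in Set.Ioo 0 s, f t) ^ p ∂μ ≤
          C ^ p * ∫⁻ x in Set.Ioi 0, f x ^ p ∂ν) → B ≤ C) ∧
    (B ≠ ⊤ → ∀ f : ℝ → ℝ≥0∞, Measurable f →
        ∫⁻ s in Set.Ioi 0, (∫⁻ t in Set.Ioo 0 s, f t) ^ p ∂μ ≤
          (ENNReal.ofReal (p' ^ (1 / p') * p ^ (1 / p)) * B) ^ p *
            ∫⁻ x in Set.Ioi 0, f x ^ p ∂ν) := by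
  have hpq : p.HolderConjugate p' := (Real.holderConjugate_iff_eq_conjExponent hp).2 hp'
  rw [← muckenhouptConst_dualMeasure_id_restrict_Ioi hpq.symm.pos] at hB
  simp_rw [← hardyInequality_id_restrict_Ioi_iff hμ0 hν0, hdec]
  exact weighted_hardy_inequality_general measurable_id _ μ hψ.coe_nnreal_ennreal
    (.of_forall fun _ ↦ ENNReal.coe_ne_top) hσ hpq hB
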